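/- Let ≤ be an embedding order on A*. Suppose that for 1 ≤ i ≤ k the words W_i and V_i satisfy I_{W_i}(x) = I_{V_i}(x), and let π be a permutation of {1,…,k}. If both factorisations W = W₁W₂⋯W_k and V = V_{π(1)}V_{π(2)}⋯V_{π(k)} are incompatible, then I_W(x) = I_V(x). -/

import Mathlib

/-!
Cut a word `X` containing `W` after its shortest prefix that contains `W`: the prefix is a minimal
container of `W` and the rest is arbitrary, so `I_W = I*_W · I_ε`. The same cut applied to a
container of `U ++ V` leaves a container of `V` as the rest, provided that no letter of `X` has to
absorb both the end of `U` and the beginning of `V`; hence `I_{UV} = I*_U · I_V` when the junction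
is incompatible. Iterating, `I_W = I*_{W₁} ⋯ I*_{W_k} · I_ε` for an incompatible factorisation of
`W`. This is symmetric in the factors, and `I*_{W_i}` is determined by `I_{W_i}` since `I_ε ≠ 0`.
-/

/-- An embedding order on words over a weighted alphabet. -/
structure EmbeddingOrder (A : Type*) (w : A → ℕ) where
  le : List A → List A → Prop
  le_refl : ∀ W, le W W
  le_trans : ∀ {U V W}, le U V → le V W → le U W
  le_antisymm : ∀ {V W}, le V W → le W V → V = W
  nil_le : ∀ W, le [] W
  weight_lt : ∀ {W V}, le W V → W ≠ V → (W.map w).sum < (V.map w).sum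
  le_iff_factor : ∀ W V, le W V ↔ ∃ Ws : List (List A),
    Ws.length = V.length ∧ Ws.flatten = W ∧ ∀ q ∈ Ws.zip V, le q.1 [q.2]

/-- The weight of a word: the sum of the weights of its letters. -/
def wt {A : Type*} (w : A → ℕ) (W : List A) : ℕ := (W.map w).sum

/-- `V` is a *minimal container* of `W` (written `W ≤* V`): `W ≤ V` but `W ≰ P` for
every proper prefix `P` of `V`. -/
def MinContainer {A : Type*} {w : A → ℕ} (E : EmbeddingOrder A w) (W V : List A) : Prop :=
  E.le W V ∧ ∀ P : List A, P <+: V → P ≠ V → ¬ E.le W P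

/-- The generating function `A(x) = Σ_{a ∈ A} x^{weight a}` of the alphabet,
as a formal power series (with integer coefficients). -/
noncomputable def Aser (A : Type*) (w : A → ℕ) : PowerSeries ℤ :=
  PowerSeries.mk fun n => (Set.ncard {a : A | w a = n} : ℤ)

/-- `I_W(x) = Σ_{V : W ≤ V} x^{weight V}` as a formal power series. -/
noncomputable def Iser {A : Type*} (w : A → ℕ) (E : EmbeddingOrder A w) (W : List A) :
    PowerSeries ℤ :=
  PowerSeries.mk fun n => (Set.ncard {V : List A | E.le W V ∧ wt w V = n} : ℤ)

/-- `I*_W(x) = Σ_{V : W ≤* V} x^{weight V}` as a formal power series. -/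
noncomputable def IserStar {A : Type*} (w : A → ℕ) (E : EmbeddingOrder A w) (W : List A) :
    PowerSeries ℤ :=
  PowerSeries.mk fun n => (Set.ncard {V : List A | MinContainer E W V ∧ wt w V = n} : ℤ)


/-- The ordered pair `(a, b)` of letters is *incompatible* if there is no letter `c`
with `ab ≤ c`. -/
def Incompat {A : Type*} {w : A → ℕ} (E : EmbeddingOrder A w) (a b : A) : Prop :=
  ¬ ∃ c : A, E.le [a, b] [c]

/-- A factorisation (a list of nonempty factors) is *incompatible* if the last letter of
each factor together with the first letter of the next factor form an incompatible pair. -/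
def IncompatFactorisation {A : Type*} {w : A → ℕ} (E : EmbeddingOrder A w)
    (Ws : List (List A)) : Prop :=
  (∀ U ∈ Ws, U ≠ []) ∧
    Ws.Chain' fun U V => ∀ a b : A, U.getLast? = some a → V.head? = some b → Incompat E a b


/-- The generating function `Σ_{x ∈ S} X^{f x}` of a set `S` with weight function `f`, of
which `Iser` and `IserStar` are definitional instances. Weights that are attained infinitely often
in `S` get the junk coefficient `0`. -/
noncomputable def generatingSeries {α : Type*} (f : α → ℕ) (S : Set α) : PowerSeries ℤ :=
  PowerSeries.mk fun n => (Set.ncard {x | x ∈ S ∧ f x = n} : ℤ)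

section GeneratingSeries

variable {α β : Type*}

theorem generatingSeries_image {f : β → ℕ} {g : α → β} {S : Set α} (hg : S.InjOn g) :
    generatingSeries f (g '' S) = generatingSeries (f ∘ g) S := by
  ext n
  have hlevel : {y | y ∈ g '' S ∧ f y = n} = g '' {x | x ∈ S ∧ (f ∘ g) x = n} :=
    (Set.image_inter_preimage g S (f ⁻¹' {n})).symm
  simp only [generatingSeries, PowerSeries.coeff_mk, hlevel]
  rw [(hg.mono fun _ hx => hx.1).ncard_image]

theorem generatingSeries_prod {f : α → ℕ} {g : β → ℕ} {S : Set α} {T : Set β}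
    (hS : ∀ n, {x | x ∈ S ∧ f x = n}.Finite) (hT : ∀ n, {y | y ∈ T ∧ g y = n}.Finite) :
    generatingSeries (fun p => f p.1 + g p.2) (S ×ˢ T) =
      generatingSeries f S * generatingSeries g T := by
  ext n
  have hlevel : {p | p ∈ S ×ˢ T ∧ f p.1 + g p.2 = n} =
      ⋃ m ∈ (Finset.HasAntidiagonal.antidiagonal n : Set (ℕ × ℕ)),
        {x | x ∈ S ∧ f x = m.1} ×ˢ {y | y ∈ T ∧ g y = m.2} := by
    ext p
    simp only [Set.mem_prod, Set.mem_ofPred_eq, Set.mem_iUnion, Finset.mem_coe,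
      Finset.HasAntidiagonal.mem_antidiagonal, Prod.exists, exists_prop]
    constructor
    · rintro ⟨⟨hx, hy⟩, hsum⟩
      exact ⟨_, _, hsum, ⟨hx, rfl⟩, hy, rfl⟩
    · rintro ⟨_, _, hsum, ⟨hx, rfl⟩, hy, rfl⟩
      exact ⟨⟨hx, hy⟩, hsum⟩
  have hdisjoint : (Finset.HasAntidiagonal.antidiagonal n : Set (ℕ × ℕ)).PairwiseDisjoint
      fun m => {x | x ∈ S ∧ f x = m.1} ×ˢ {y | y ∈ T ∧ g y = m.2} := by
    intro m _ m' _ hne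
    refine Set.disjoint_left.2 fun p hp hp' => hne (Prod.ext ?_ ?_)
    · exact hp.1.2.symm.trans hp'.1.2
    · exact hp.2.2.symm.trans hp'.2.2
  rw [PowerSeries.coeff_mul]
  simp only [generatingSeries, PowerSeries.coeff_mk]
  rw [hlevel, (Finset.finite_toSet _).ncard_biUnion (fun m _ => (hS m.1).prod (hT m.2)) hdisjoint,
    finsum_mem_coe_finset]
  simp only [Set.ncard_prod, Nat.cast_sum, Nat.cast_mul]

theorem generatingSeries_ne_zero {f : α → ℕ} {S : Set α} {x : α} (hx : x ∈ S)
    (hfin : {y | y ∈ S ∧ f y = f x}.Finite) : generatingSeries f S ≠ 0 := by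
  intro hzero
  have hcoeff := congrArg (PowerSeries.coeff (f x)) hzero
  simp only [generatingSeries, PowerSeries.coeff_mk, map_zero, Nat.cast_eq_zero] at hcoeff
  exact Set.ncard_ne_zero_of_mem (show x ∈ {y | y ∈ S ∧ f y = f x} from ⟨hx, rfl⟩) hfin hcoeff

end GeneratingSeries

section Words

variable {A : Type*} {w : A → ℕ}

theorem wt_append (w : A → ℕ) (U V : List A) : wt w (U ++ V) = wt w U + wt w V := by
  simp [wt]

theorem wt_cons (w : A → ℕ) (a : A) (W : List A) : wt w (a :: W) = w a + wt w W := by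
  simp [wt]

theorem finite_setOfPred_wt_eq (hw : ∀ a, 0 < w a) (hfin : ∀ n, {a | w a = n}.Finite) (n : ℕ) :
    {W : List A | wt w W = n}.Finite := by
  induction n using Nat.strong_induction_on with
  | _ n ih =>
    have hcover : {W : List A | wt w W = n} ⊆ {[]} ∪ ⋃ m ∈ Set.Iio n,
        Set.image2 List.cons {a | w a = n - m} {W | wt w W = m} := by
      rintro (_ | ⟨a, W⟩) hW
      · exact Or.inl rfl
      · have hsum : w a + wt w W = n := wt_cons w a W ▸ hW
        have ha := hw a
        exact Or.inr (Set.mem_biUnion (show wt w W < n by omega)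
          ⟨a, show w a = n - wt w W by omega, W, rfl, rfl⟩)
    exact ((Set.finite_singleton _).union ((Set.finite_Iio n).biUnion
      fun m hm => (hfin _).image2 _ (ih m hm))).subset hcover

theorem injOn_append_of_isAntichain_prefix {S : Set (List A)} (hS : IsAntichain (· <+: ·) S)
    (T : Set (List A)) : (S ×ˢ T).InjOn fun p => p.1 ++ p.2 := by
  rintro ⟨P, Q⟩ ⟨hP, -⟩ ⟨P', Q'⟩ ⟨hP', -⟩ (happend : P ++ Q = P' ++ Q')
  obtain rfl : P = P' := by
    rcases List.prefix_or_prefix_of_prefix (List.prefix_append P Q)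
      (happend ▸ List.prefix_append P' Q') with hprefix | hprefix
    · exact hS.eq hP hP' hprefix
    · exact (hS.eq hP' hP hprefix).symm
  rw [List.append_cancel_left happend]

theorem generatingSeries_image2_append (hw : ∀ a, 0 < w a) (hfin : ∀ n, {a | w a = n}.Finite)
    {S : Set (List A)} (hS : IsAntichain (· <+: ·) S) (T : Set (List A)) :
    generatingSeries (wt w) (Set.image2 (· ++ ·) S T) =
      generatingSeries (wt w) S * generatingSeries (wt w) T := by
  have hlevel (R : Set (List A)) (n : ℕ) : {W | W ∈ R ∧ wt w W = n}.Finite :=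
    (finite_setOfPred_wt_eq hw hfin n).subset fun _ hW => hW.2
  rw [← generatingSeries_prod (hlevel S) (hlevel T), ← Set.image_prod,
    generatingSeries_image (injOn_append_of_isAntichain_prefix hS T)]
  congr 1
  funext p
  exact wt_append w p.1 p.2

end Words

/-- Incompatibility of the junction `U V`, the condition that `IncompatFactorisation` imposes on
consecutive factors. It holds vacuously if `U` or `V` is empty. -/
def IncompatWords {A : Type*} {w : A → ℕ} (E : EmbeddingOrder A w) (U V : List A) : Prop :=
  ∀ a b : A, U.getLast? = some a → V.head? = some b → Incompat E a b

namespace EmbeddingOrder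

variable {A : Type*} {w : A → ℕ}

theorem weight_pos (E : EmbeddingOrder A w) (a : A) : 0 < w a := by
  simpa using E.weight_lt (E.nil_le [a]) (List.cons_ne_nil a []).symm

variable (E : EmbeddingOrder A w) {U V W P Q X : List A}

theorem le_nil_iff : E.le W [] ↔ W = [] :=
  ⟨fun h => E.le_antisymm h (E.nil_le W), fun h => h ▸ E.le_refl []⟩

theorem le_cons_iff {c : A} : E.le W (c :: X) ↔ ∃ T R, W = T ++ R ∧ E.le T [c] ∧ E.le R X := by
  simp only [E.le_iff_factor W, E.le_iff_factor _ X]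
  constructor
  · rintro ⟨_ | ⟨T, Ts⟩, hlength, rfl, hle⟩
    · simp at hlength
    · simp only [List.zip_cons_cons, List.forall_mem_cons] at hle
      exact ⟨T, Ts.flatten, rfl, hle.1, Ts, by simpa using hlength, rfl, hle.2⟩
  · rintro ⟨T, _, rfl, hT, Ts, hlength, rfl, hle⟩
    exact ⟨T :: Ts, by simp [hlength], rfl, List.forall_mem_cons.2 ⟨hT, hle⟩⟩

theorem isAntichain_minContainer (W : List A) :
    IsAntichain (· <+: ·) {X | MinContainer E W X} :=
  fun P hP _ hX hne hprefix => hX.2 P hprefix hne hP.1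

variable {E}

theorem append_le_append (hU : E.le U P) (hV : E.le V Q) : E.le (U ++ V) (P ++ Q) := by
  induction P generalizing U with
  | nil => rwa [E.le_nil_iff.1 hU]
  | cons c P ih =>
    obtain ⟨T, R, rfl, hT, hR⟩ := E.le_cons_iff.1 hU
    exact E.le_cons_iff.2 ⟨T, R ++ V, List.append_assoc T R V, hT, ih hR⟩

theorem le_append_right (h : E.le W P) (Q : List A) : E.le W (P ++ Q) := by
  simpa using append_le_append h (E.nil_le Q)

theorem le_append_left (P : List A) (h : E.le W Q) : E.le W (P ++ Q) :=
  append_le_append (E.nil_le P) h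

theorem exists_minContainer_prefix (h : E.le W X) : ∃ P, P <+: X ∧ MinContainer E W P := by
  obtain ⟨P, ⟨hPX, hWP⟩, hmin⟩ :=
    exists_minimalFor_of_wellFoundedLT (fun P => P <+: X ∧ E.le W P) List.length
      ⟨X, List.prefix_refl X, h⟩
  refine ⟨P, hPX, hWP, fun P' hP' hne hWP' => hne (hP'.eq_of_length_le ?_)⟩
  exact hmin ⟨hP'.trans hPX, hWP'⟩ hP'.length_le

end EmbeddingOrder

namespace IncompatWords

variable {A : Type*} {w : A → ℕ} {E : EmbeddingOrder A w} {U U' V V' X : List A}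

theorem nil_right (U : List A) : IncompatWords E U [] := by
  simp [IncompatWords]

theorem of_append_left (h : IncompatWords E (U' ++ U) V) : IncompatWords E U V :=
  fun a b ha hb => h a b (by simp [ha]) hb

theorem of_append_right (h : IncompatWords E U (V ++ V')) : IncompatWords E U V :=
  fun a b ha hb => h a b ha (by simp [hb])

theorem append_right (h : IncompatWords E U V) (hV : V ≠ []) (V' : List A) :
    IncompatWords E U (V ++ V') :=
  fun a b ha hb => h a b ha (by rwa [List.head?_append_of_ne_nil _ hV] at hb)

theorem not_append_le_singleton (h : IncompatWords E U V) (hU : U ≠ []) (hV : V ≠ []) (c : A) :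
    ¬ E.le (U ++ V) [c] := by
  obtain ⟨U, a, rfl⟩ := U.eq_nil_or_concat.resolve_left hU
  obtain ⟨b, V, rfl⟩ := List.exists_cons_of_ne_nil hV
  intro hle
  have hab : E.le [a, b] (U ++ ([a, b] ++ V)) :=
    EmbeddingOrder.le_append_left U (EmbeddingOrder.le_append_right (E.le_refl [a, b]) V)
  exact h a b (by simp) rfl ⟨c, E.le_trans hab (by simpa using hle)⟩

theorem exists_eq_append_of_append_le (h : IncompatWords E U V) (hX : E.le (U ++ V) X) :
    ∃ P Q, X = P ++ Q ∧ E.le U P ∧ E.le V Q := by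
  induction X generalizing U with
  | nil =>
    obtain ⟨rfl, rfl⟩ := List.append_eq_nil_iff.1 (E.le_nil_iff.1 hX)
    exact ⟨[], [], rfl, E.le_refl [], E.le_refl []⟩
  | cons c X ih =>
    obtain ⟨T, R, hTR, hT, hR⟩ := E.le_cons_iff.1 hX
    rcases List.append_eq_append_iff.1 hTR with ⟨V', rfl, rfl⟩ | ⟨U', rfl, rfl⟩
    · by_cases hU : U = []
      · exact ⟨[], c :: X, rfl, hU ▸ E.le_refl [], by simpa [hU] using hX⟩
      by_cases hV' : V' = []
      · exact ⟨[c], X, rfl, by simpa [hV'] using hT, by simpa [hV'] using hR⟩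
      exact absurd hT (h.of_append_right.not_append_le_singleton hU hV' c)
    · obtain ⟨P, Q, rfl, hP, hQ⟩ := ih h.of_append_left hR
      exact ⟨c :: P, Q, rfl, E.le_cons_iff.2 ⟨T, U', rfl, hT, hP⟩, hQ⟩

theorem setOfPred_append_le (h : IncompatWords E U V) :
    {X | E.le (U ++ V) X} = Set.image2 (· ++ ·) {P | MinContainer E U P} {Q | E.le V Q} := by
  ext X
  constructor
  · intro hX
    obtain ⟨P, Q, rfl, hP, hQ⟩ := h.exists_eq_append_of_append_le hX
    obtain ⟨P', ⟨R, rfl⟩, hP'⟩ := EmbeddingOrder.exists_minContainer_prefix hP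
    exact ⟨P', hP', R ++ Q, EmbeddingOrder.le_append_left R hQ, (List.append_assoc P' R Q).symm⟩
  · rintro ⟨P, hP, Q, hQ, rfl⟩
    exact EmbeddingOrder.append_le_append hP.1 hQ

theorem Iser_append (h : IncompatWords E U V) (hfin : ∀ n, {a | w a = n}.Finite) :
    Iser w E (U ++ V) = IserStar w E U * Iser w E V :=
  calc
    Iser w E (U ++ V) = generatingSeries (wt w) {X | E.le (U ++ V) X} := rfl
    _ = generatingSeries (wt w)
          (Set.image2 (· ++ ·) {P | MinContainer E U P} {Q | E.le V Q}) := by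
        rw [h.setOfPred_append_le]
    _ = IserStar w E U * Iser w E V :=
        generatingSeries_image2_append E.weight_pos hfin (E.isAntichain_minContainer U) _

end IncompatWords

section Factorisation

variable {A : Type*} {w : A → ℕ} {E : EmbeddingOrder A w} {U V : List A} {L : List (List A)}

theorem IncompatFactorisation.tail (h : IncompatFactorisation E (U :: L)) :
    IncompatFactorisation E L :=
  ⟨fun V hV => h.1 V (List.mem_cons_of_mem U hV), h.2.tail⟩

theorem IncompatFactorisation.incompatWords_flatten (h : IncompatFactorisation E (U :: L)) :
    IncompatWords E U L.flatten := by
  cases L with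
  | nil => exact .nil_right U
  | cons V L =>
    have hUV : IncompatWords E U V := (List.isChain_cons_cons.1 h.2).1
    exact hUV.append_right (h.1 V (by simp)) L.flatten

theorem Iser_flatten (hfin : ∀ n, {a | w a = n}.Finite) (hL : IncompatFactorisation E L) :
    Iser w E L.flatten = (L.map (IserStar w E)).prod * Iser w E [] := by
  induction L with
  | nil => simp
  | cons U L ih =>
    rw [List.flatten_cons, hL.incompatWords_flatten.Iser_append hfin, ih hL.tail, List.map_cons,
      List.prod_cons, mul_assoc]

theorem Iser_nil_ne_zero (hfin : ∀ n, {a | w a = n}.Finite) : Iser w E [] ≠ 0 :=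
  generatingSeries_ne_zero (S := {X | E.le [] X}) (E.nil_le [])
    ((finite_setOfPred_wt_eq E.weight_pos hfin _).subset fun _ hX => hX.2)

theorem IserStar_eq_of_Iser_eq (hfin : ∀ n, {a | w a = n}.Finite) (h : Iser w E U = Iser w E V) :
    IserStar w E U = IserStar w E V := by
  have hcut (W : List A) : Iser w E W = IserStar w E W * Iser w E [] := by
    simpa using (IncompatWords.nil_right (E := E) W).Iser_append hfin
  rw [hcut U, hcut V] at h
  exact mul_right_cancel₀ (Iser_nil_ne_zero hfin) h

end Factorisation

/-- **Corollary `cor-incompatible-shuffle`.**  Suppose that for `1 ≤ i ≤ k` we have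
`I_{W_i}(x) = I_{V_i}(x)`, and let `π` be a permutation of `{1,…,k}`.  If both
factorisations `W = W₁W₂⋯W_k` and `V = V_{π(1)}V_{π(2)}⋯V_{π(k)}` are incompatible,
then `I_W(x) = I_V(x)`. -/
theorem Iser_eq_of_incompat_shuffle {A : Type*} (w : A → ℕ)
    (hw : ∀ a, 0 < w a) (hfin : ∀ n, {a : A | w a = n}.Finite)
    (E : EmbeddingOrder A w)
    (k : ℕ) (hk : 0 < k) (Ws Vs : Fin k → List A)
    (hWV : ∀ i, Iser w E (Ws i) = Iser w E (Vs i))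
    (π : Equiv.Perm (Fin k))
    (hW : IncompatFactorisation E (List.ofFn Ws))
    (hV : IncompatFactorisation E (List.ofFn fun i => Vs (π i))) :
    Iser w E (List.ofFn Ws).flatten
      = Iser w E (List.ofFn fun i => Vs (π i)).flatten := by
  have hstar (i : Fin k) : IserStar w E (Ws i) = IserStar w E (Vs i) :=
    IserStar_eq_of_Iser_eq hfin (hWV i)
  rw [Iser_flatten hfin hW, Iser_flatten hfin hV]
  congr 1
  simp only [List.map_ofFn, List.prod_ofFn, Function.comp_apply, hstar]
  exact (Equiv.prod_comp π fun i => IserStar w E (Vs i)).symm
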